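/- Let q > 2, λ > 0, and let f : [0,∞) → ℝ be a twice continuously differentiable solution of the ODE f''(ξ) + λ|f'(ξ)|^q − (1/2)ξ f'(ξ) + ((q−2)/(2(q−1))) f(ξ) = 0 on [0,∞) with f(0) = −1 and f'(0) = 0, and define g(t) = e^{−t/(q−1)} f'(e^t). Then limsup_{t→∞} g(t) ≤ C₀, where C₀ = (1/(λq))^{1/(q−1)}. -/

import Mathlib

open Set Filter Topology Real

/-- `f` is a twice continuously differentiable solution, on the set `s`, of the
self-similar profile ODE `f'' + λ|f'|^q - (1/2)ξ f' + ((q-2)/(2(q-1))) f = 0`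
associated with the generalized deterministic KPZ equation. -/
def SolvesKPZProfile (q lam : ℝ) (s : Set ℝ) (f : ℝ → ℝ) : Prop :=
  ContDiffOn ℝ 2 f s ∧
  ∀ ξ ∈ s,
    derivWithin (derivWithin f s) s ξ + lam * |derivWithin f s ξ| ^ q
      - (1 / 2) * ξ * derivWithin f s ξ + ((q - 2) / (2 * (q - 1))) * f ξ = 0

/-- The function `g(t) = e^{-t/(q-1)} f'(e^t)`, i.e. the profile derivative in the
variables `f'(ξ) = ξ^{1/(q-1)} g(t)`, `ξ = e^t`. -/
noncomputable def kpzG (q : ℝ) (f : ℝ → ℝ) : ℝ → ℝ :=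
  fun t => Real.exp (-t / (q - 1)) * derivWithin f (Set.Ici 0) (Real.exp t)


/-- A quantity whose derivative exceeds `m` whenever it is nonpositive becomes nonnegative. -/
lemma kpz_cross (D D' : ℝ → ℝ) (s T m M : ℝ) (hm : 0 < m) (hM : 0 ≤ M)
    (hD : ∀ x ∈ Icc s T, HasDerivAt D (D' x) x) (h0 : -M ≤ D s)
    (h1 : ∀ x ∈ Icc s T, D x ≤ 0 → m < D' x) :
    ∀ x ∈ Icc (s + M / m) T, 0 ≤ D x := by
  intro x hx
  have hsM : s ≤ s + M / m := by have := div_nonneg hM hm.le; linarith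
  have hsT : s + M / m ≤ T := hx.1.trans hx.2
  have e1 : 0 ≤ D (s + M / m) := by
    have := image_le_of_deriv_right_lt_deriv_boundary' (f := fun x => - D x)
      (f' := fun x => - D' x) (a := s) (b := s + M / m)
      (B := fun x => M - m * (x - s)) (B' := fun _ => - m)
      (fun y hy => (hD y ⟨hy.1, hy.2.trans hsT⟩).continuousAt.continuousWithinAt.neg)
      (fun y hy => (hD y ⟨hy.1, hy.2.le.trans hsT⟩).neg.hasDerivWithinAt)
      (by simp; linarith)
      (by fun_prop)
      (fun y hy => by
        have : HasDerivAt (fun x => M - m * (x - s)) (0 - m * 1) y :=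
          (hasDerivAt_const y M).sub (((hasDerivAt_id y).sub_const s).const_mul m)
        simpa using this.hasDerivWithinAt)
      (fun y hy hyB => by
        have h2 : 0 ≤ M - m * (y - s) := by
          have : y - s ≤ M / m := by linarith [hy.2]
          have := mul_le_mul_of_nonneg_left this hm.le
          rw [mul_div_cancel₀ _ hm.ne'] at this
          linarith
        have := h1 y ⟨hy.1, hy.2.le.trans hsT⟩ (by linarith)
        linarith) (right_mem_Icc.2 hsM)
    simp only [add_sub_cancel_left, mul_div_cancel₀ _ hm.ne'] at this
    linarith
  have := image_le_of_deriv_right_lt_deriv_boundary' (f := fun x => - D x)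
      (f' := fun x => - D' x) (a := s + M / m) (b := T)
      (B := fun x => 0) (B' := fun _ => 0)
      (fun y hy => (hD y ⟨hsM.trans hy.1, hy.2⟩).continuousAt.continuousWithinAt.neg)
      (fun y hy => (hD y ⟨hsM.trans hy.1, hy.2.le⟩).neg.hasDerivWithinAt)
      (by simpa using e1)
      (by fun_prop)
      (fun y hy => hasDerivWithinAt_const _ _ _)
      (fun y hy hyB => by
        have := h1 y ⟨hsM.trans hy.1, hy.2.le⟩ (by linarith)
        linarith) hx
  linarith

lemma kpz_mono (W V : ℝ → ℝ) (β x y : ℝ) (hx : 0 < x) (hxy : x ≤ y)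
    (hW : ∀ ξ, 0 < ξ → HasDerivAt W (V ξ) ξ)
    (hD : ∀ ξ ∈ Icc x y, 0 ≤ ξ * V ξ - β * W ξ) :
    W x * x ^ (-β) ≤ W y * y ^ (-β) := by
  have hd : ∀ ξ ∈ Icc x y, HasDerivAt (fun ξ => W ξ * ξ ^ (-β))
      (V ξ * ξ ^ (-β) + W ξ * (-β * ξ ^ (-β - 1))) ξ := fun ξ hξ =>
    (hW ξ (hx.trans_le hξ.1)).mul
      (Real.hasDerivAt_rpow_const (Or.inl (hx.trans_le hξ.1).ne'))
  refine monotoneOn_of_hasDerivWithinAt_nonneg (convex_Icc x y)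
    (f := fun ξ => W ξ * ξ ^ (-β))
    (f' := fun ξ => V ξ * ξ ^ (-β) + W ξ * (-β * ξ ^ (-β - 1)))
    (fun ξ hξ => (hd ξ hξ).continuousAt.continuousWithinAt)
    (fun ξ hξ => (hd ξ (interior_subset hξ)).hasDerivWithinAt) ?_
    (left_mem_Icc.2 hxy) (right_mem_Icc.2 hxy) hxy
  intro ξ hξ
  have hξ := interior_subset hξ
  have h0 : 0 < ξ := hx.trans_le hξ.1
  have e : ξ ^ (-β) = ξ * ξ ^ (-β - 1) := by
    rw [Real.rpow_sub_one h0.ne']; field_simp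
  rw [e]
  have := mul_nonneg (hD ξ hξ) (Real.rpow_pos_of_pos h0 (-β - 1)).le
  linarith

lemma kpz_core1 (W V U : ℝ → ℝ) (α b μ β r : ℝ)
    (hW : ∀ ξ, 0 < ξ → HasDerivAt W (V ξ) ξ)
    (hV : ∀ ξ, 0 < ξ → HasDerivAt V (U ξ) ξ)
    (hWp : ∀ ξ, 0 < ξ → 0 < W ξ) (hVp : ∀ ξ, 0 < ξ → 0 < V ξ)
    (hWm : ∀ x y, 0 < x → x ≤ y → W x ≤ W y)
    (hμ : 0 < μ) (hβ : 0 < β) (hβμ : β * μ < α / 2) (hr : 1 < r)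
    (hU : ∀ ξ, 0 < ξ → W ξ ≤ b * ξ ^ α → -μ * ξ * V ξ + α / 2 * W ξ ≤ U ξ) :
    ∃ X, 0 < X ∧ ∀ s T, X ≤ s → (∀ ξ ∈ Icc s T, W ξ ≤ b * ξ ^ α) →
      ∀ ξ ∈ Icc (r * s) T, 0 ≤ ξ * V ξ - β * W ξ := by
  obtain ⟨κ, hκ0, hκ⟩ : ∃ κ, 0 < κ ∧ 2 * κ = α / 2 - β * μ :=
    ⟨(α / 2 - β * μ) / 2, by linarith, by ring⟩
  have hr1 : 0 < r - 1 := by linarith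
  obtain ⟨X, hX1, hX2⟩ : ∃ X, 1 ≤ X ∧ β ^ 2 / κ + 2 * β / (κ * (r - 1)) ≤ X :=
    ⟨max 1 _, le_max_left _ _, le_max_right _ _⟩
  have p1 : 0 < β ^ 2 / κ := by positivity
  have p2 : 0 < 2 * β / (κ * (r - 1)) := by positivity
  refine ⟨X, by linarith, ?_⟩
  intro s T hs hb ξ hξ
  have hs0 : 0 < s := by linarith
  have hws := hWp s hs0
  have key := kpz_cross (fun ξ => ξ * V ξ - β * W ξ)
    (fun ξ => (1 * V ξ + ξ * U ξ) - β * V ξ) s T (κ * s * W s / 2) (β * W s)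
    (by positivity) (by positivity)
    (fun x hx => by
      have h0 : 0 < x := hs0.trans_le hx.1
      exact ((hasDerivAt_id x).mul (hV x h0)).sub ((hW x h0).const_mul β))
    (by have := mul_pos hs0 (hVp s hs0); linarith)
    (fun x hx hD => by
      have h0 : 0 < x := hs0.trans_le hx.1
      have h1 := hU x h0 (hb x hx)
      have hw := hWp x h0
      have hv := hVp x h0
      have hwm := hWm s x hs0 hx.1
      have hD' : x * V x ≤ β * W x := by linarith
      have h2 : x * (-μ * x * V x + α / 2 * W x) ≤ x * U x :=
        mul_le_mul_of_nonneg_left h1 h0.le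
      have h3 : μ * x * (x * V x) ≤ μ * x * (β * W x) :=
        mul_le_mul_of_nonneg_left hD' (by positivity)
      -- lower bound `x * U x ≥ 2 κ x W x`
      have h4 : 2 * κ * (x * W x) ≤ x * U x := by
        rw [hκ]; nlinarith
      have hx1 : 1 ≤ x := by linarith [hx.1]
      have h5 : β ^ 2 ≤ κ * x := by
        have : β ^ 2 / κ ≤ x := by linarith [hx.1]
        rw [div_le_iff₀ hκ0] at this; linarith
      have h6 : β * V x ≤ κ * x * W x := by
        have a1 : V x ≤ β * W x := by nlinarith
        have a2 : β * V x ≤ β ^ 2 * W x := by nlinarith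
        have a3 := mul_le_mul_of_nonneg_right h5 hw.le
        linarith
      have h7 : s * W s ≤ x * W x := mul_le_mul hx.1 hwm hws.le h0.le
      have h8 := mul_le_mul_of_nonneg_left h7 hκ0.le
      have h9 : 0 < κ * (s * W s) := by positivity
      nlinarith)
  apply key ξ ⟨le_trans ?_ hξ.1, hξ.2⟩
  have : β * W s / (κ * s * W s / 2) = 2 * β / (κ * s) := by field_simp
  rw [this]
  have h10 : 2 * β / (κ * s) ≤ (r - 1) * s := by
    have h11 : 2 * β / (κ * (r - 1)) ≤ s := by linarith
    rw [div_le_iff₀ (by positivity)] at h11 ⊢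
    have : s * (κ * (r - 1)) ≤ s * (κ * (r - 1)) * s :=
      le_mul_of_one_le_right (by positivity) (by linarith)
    linarith
  linarith

lemma kpz_core (W V U : ℝ → ℝ) (α b μ a : ℝ) (hα : 0 < α)
    (hW : ∀ ξ, 0 < ξ → HasDerivAt W (V ξ) ξ)
    (hV : ∀ ξ, 0 < ξ → HasDerivAt V (U ξ) ξ)
    (hWp : ∀ ξ, 0 < ξ → 0 < W ξ) (hVp : ∀ ξ, 0 < ξ → 0 < V ξ)
    (hμ : 0 < μ) (hμ2 : μ < 1 / 2) (ha : 0 < a) (hab : a < b)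
    (hU : ∀ ξ, 0 < ξ → W ξ ≤ b * ξ ^ α → -μ * ξ * V ξ + α / 2 * W ξ ≤ U ξ) :
    ∀ᶠ ξ in atTop, a * ξ ^ α ≤ W ξ := by
  have hWm : ∀ x y, 0 < x → x ≤ y → W x ≤ W y := by
    intro x y hx hxy
    have := kpz_mono W V 0 x y hx hxy hW (fun ξ hξ => by
      have h0 : 0 < ξ := hx.trans_le hξ.1
      have := mul_pos h0 (hVp ξ h0)
      linarith)
    simpa using this
  obtain ⟨β, hαβ, hβ2⟩ : ∃ β, α < β ∧ β < α / (2 * μ) := by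
    apply exists_between
    rw [lt_div_iff₀ (by positivity)]
    nlinarith
  rw [lt_div_iff₀ (by positivity)] at hβ2
  have hβ : 0 < β := hα.trans hαβ
  have hb : 0 < b := ha.trans hab
  set r := (b / a) ^ (1 / α) with hrdef
  have hr : 1 < r := Real.one_lt_rpow ((one_lt_div ha).2 hab) (by positivity)
  have hrα : r ^ α * a = b := by
    rw [hrdef, ← Real.rpow_mul (by positivity), one_div_mul_cancel hα.ne', Real.rpow_one]
    field_simp
  obtain ⟨X, hX, hL⟩ := kpz_core1 W V U α b μ β r hW hV hWp hVp hWm hμ hβ (by linarith) hr hU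
  have hr0 : 0 < r := by linarith
  -- first, a late point where `W > b ξ ^ α`
  obtain ⟨x₁, hx₁, hbx₁⟩ : ∃ x₁, X ≤ x₁ ∧ b * x₁ ^ α < W x₁ := by
    by_contra hcon
    push Not at hcon
    have hrX : 0 < r * X := by positivity
    have h1 : ∀ y, r * X ≤ y → W (r * X) * (r * X) ^ (-β) ≤ W y * y ^ (-β) := fun y hy =>
      kpz_mono W V β (r * X) y hrX hy hW
        (hL X y le_rfl (fun ξ hξ => hcon ξ hξ.1))
    have hc : 0 < W (r * X) * (r * X) ^ (-β) :=
      mul_pos (hWp _ hrX) (Real.rpow_pos_of_pos hrX _)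
    have h2 : Tendsto (fun y : ℝ => b * y ^ (-(β - α))) atTop (𝓝 (b * 0)) :=
      (tendsto_rpow_neg_atTop (by linarith)).const_mul b
    rw [mul_zero] at h2
    obtain ⟨y, hy1, hy2, hy3⟩ := ((h2.eventually (gt_mem_nhds hc)).and
      ((eventually_ge_atTop (r * X)).and (eventually_ge_atTop X))).exists
    have hy0 : 0 < y := by linarith
    have h3 := h1 y hy2
    have h4 : W y * y ^ (-β) ≤ b * y ^ α * y ^ (-β) :=
      mul_le_mul_of_nonneg_right (hcon y hy3) (Real.rpow_pos_of_pos hy0 _).le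
    rw [mul_assoc, ← Real.rpow_add hy0, show α + -β = -(β - α) by ring] at h4
    linarith
  filter_upwards [eventually_ge_atTop x₁] with y hy
  by_contra hya
  push Not at hya
  have hx₁0 : 0 < x₁ := by linarith
  -- last point `s` with `b s ^ α ≤ W s`
  have hcont : ContinuousOn (fun ξ => W ξ - b * ξ ^ α) (Icc x₁ y) := fun ξ hξ => by
    have h0 : 0 < ξ := hx₁0.trans_le hξ.1
    exact ((hW ξ h0).continuousAt.sub
      (continuousAt_const.mul (Real.continuousAt_rpow_const _ _ (Or.inl h0.ne')))).continuousWithinAt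
  have hcl : IsCompact (Icc x₁ y ∩ (fun ξ => W ξ - b * ξ ^ α) ⁻¹' Ici 0) :=
    isCompact_Icc.of_isClosed_subset (hcont.preimage_isClosed_of_isClosed isClosed_Icc isClosed_Ici)
      inter_subset_left
  obtain ⟨s, ⟨hs1, hs2⟩, hsmax⟩ := hcl.exists_isGreatest
    ⟨x₁, left_mem_Icc.2 hy, by simp only [mem_preimage, mem_Ici]; linarith⟩
  simp only [mem_preimage, mem_Ici] at hs2
  have hs0 : 0 < s := hx₁0.trans_le hs1.1
  have hlt : ∀ ξ ∈ Ioc s y, W ξ < b * ξ ^ α := by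
    intro ξ hξ
    by_contra hc
    push Not at hc
    have := hsmax ⟨⟨hs1.1.trans hξ.1.le, hξ.2⟩, by simp only [mem_preimage, mem_Ici]; linarith⟩
    exact absurd this (not_le.2 hξ.1)
  have hsy : s < y := by
    rcases hs1.2.lt_or_eq with h | h
    · exact h
    · subst h
      have := mul_lt_mul_of_pos_right hab (Real.rpow_pos_of_pos hs0 α)
      linarith
  have hle : ∀ ξ ∈ Icc s y, W ξ ≤ b * ξ ^ α := by
    intro ξ hξ
    rcases hξ.1.lt_or_eq with h | h
    · exact (hlt ξ ⟨h, hξ.2⟩).le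
    · subst h
      have hev : ∀ᶠ z in 𝓝[>] s, W z - b * z ^ α ≤ 0 := by
        filter_upwards [Ioc_mem_nhdsGT hsy] with z hz
        linarith [hlt z hz]
      have ht : Tendsto (fun ξ => W ξ - b * ξ ^ α) (𝓝[>] s) (𝓝 (W s - b * s ^ α)) :=
        ((hW s hs0).continuousAt.sub (continuousAt_const.mul
          (Real.continuousAt_rpow_const _ _ (Or.inl hs0.ne')))).tendsto.mono_left nhdsWithin_le_nhds
      have := le_of_tendsto ht hev
      linarith
  have hz : ∀ z, s ≤ z → z ≤ r * s → a * z ^ α ≤ W z := by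
    intro z h1 h2
    have h3 := hWm s z hs0 h1
    have h4 : z ^ α ≤ (r * s) ^ α := Real.rpow_le_rpow (by linarith) h2 hα.le
    rw [Real.mul_rpow hr0.le hs0.le] at h4
    have h5 := mul_le_mul_of_nonneg_left h4 ha.le
    have h6 : a * (r ^ α * s ^ α) = b * s ^ α := by rw [← hrα]; ring
    linarith
  rcases le_total y (r * s) with h | h
  · linarith [hz y hsy.le h]
  · have h1 := hL s y (hx₁.trans hs1.1) hle
    have hrs : s ≤ r * s := by nlinarith
    have hrs0 : 0 < r * s := by linarith
    have h2 := kpz_mono W V α (r * s) y hrs0 h hW (fun ξ hξ => by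
      have := h1 ξ hξ
      have := mul_le_mul_of_nonneg_right hαβ.le (hWp ξ (hrs0.trans_le hξ.1)).le
      linarith)
    have h3 := hz (r * s) hrs le_rfl
    have hy0 : 0 < y := by linarith
    have h4 : a ≤ W (r * s) * (r * s) ^ (-α) := by
      rw [Real.rpow_neg hrs0.le, ← div_eq_mul_inv, le_div_iff₀ (Real.rpow_pos_of_pos hrs0 _)]
      exact h3
    have h5 := h4.trans h2
    rw [Real.rpow_neg hy0.le, ← div_eq_mul_inv, le_div_iff₀ (Real.rpow_pos_of_pos hy0 _)] at h5
    linarith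

/-- positivity of the second derivative -/
lemma kpz_pos (W V U A : ℝ → ℝ) (k : ℝ) (hk : 0 < k)
    (hWc : ContinuousOn W (Ici 0)) (hVc : ContinuousOn V (Ici 0))
    (hW : ∀ ξ, 0 < ξ → HasDerivAt W (V ξ) ξ)
    (hV : ∀ ξ, 0 < ξ → HasDerivAt V (U ξ) ξ)
    (hU : ∀ ξ, 0 < ξ → U ξ = A ξ * V ξ + k * W ξ)
    (hW0 : W 0 = 0) (hV0 : 0 < V 0) :
    (∀ ξ, 0 ≤ ξ → 0 < V ξ) ∧ ∀ ξ, 0 < ξ → 0 < W ξ := by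
  have hsm : ∀ u, 0 < u → (∀ x, 0 ≤ x → x < u → 0 < V x) → 0 < W u := by
    intro u hu h
    have : StrictMonoOn W (Icc 0 u) :=
      strictMonoOn_of_deriv_pos (convex_Icc 0 u) (hWc.mono Icc_subset_Ici_self) (fun x hx => by
        rw [interior_Icc] at hx
        rw [(hW x hx.1).deriv]
        exact h x hx.1.le hx.2)
    have := this (left_mem_Icc.2 hu.le) (right_mem_Icc.2 hu.le) hu
    linarith
  have hVpos : ∀ ξ, 0 ≤ ξ → 0 < V ξ := by
    by_contra hcon
    push Not at hcon
    obtain ⟨y, hy0, hy⟩ := hcon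
    have hcl : IsCompact (Icc 0 y ∩ V ⁻¹' Iic 0) :=
      isCompact_Icc.of_isClosed_subset
        ((hVc.mono Icc_subset_Ici_self).preimage_isClosed_of_isClosed isClosed_Icc isClosed_Iic)
        inter_subset_left
    obtain ⟨u, ⟨hu1, hu2⟩, hmin⟩ := hcl.exists_isLeast ⟨y, right_mem_Icc.2 hy0, hy⟩
    simp only [mem_preimage, mem_Iic] at hu2
    have hu0 : 0 < u := by
      rcases hu1.1.lt_or_eq with h | h
      · exact h
      · subst h; linarith
    have hlt : ∀ x, 0 ≤ x → x < u → 0 < V x := by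
      intro x h0 hx
      by_contra hc
      push Not at hc
      exact absurd (hmin ⟨⟨h0, hx.le.trans hu1.2⟩, hc⟩) (not_le.2 hx)
    have hWu := hsm u hu0 hlt
    have hev : ∀ᶠ x in 𝓝[<] u, 0 < V x ∧ x < u := by
      filter_upwards [Ico_mem_nhdsLT hu0] with x hx
      exact ⟨hlt x hx.1 hx.2, hx.2⟩
    have hVu : V u = 0 := by
      apply le_antisymm hu2
      exact ge_of_tendsto ((hV u hu0).continuousAt.tendsto.mono_left nhdsWithin_le_nhds)
        (hev.mono fun x hx => hx.1.le)
    have hUu : 0 < U u := by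
      rw [hU u hu0, hVu]
      have := mul_pos hk hWu
      linarith
    have hs : Tendsto (slope V u) (𝓝[<] u) (𝓝 (U u)) :=
      (hasDerivAt_iff_tendsto_slope.1 (hV u hu0)).mono_left
        (nhdsWithin_mono _ (fun x hx => ne_of_lt hx))
    obtain ⟨x, hx1, hx2, hx3⟩ := ((hs.eventually (lt_mem_nhds hUu)).and hev).exists
    rw [slope_def_field, hVu, sub_zero] at hx1
    have := div_neg_of_pos_of_neg hx2 (sub_neg.2 hx3)
    linarith
  exact ⟨hVpos, fun ξ hξ => hsm ξ hξ (fun x h _ => hVpos x h)⟩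

set_option maxHeartbeats 1000000 in
lemma kpz_upper (q lam : ℝ) (hq : 2 < q) (hlam : 0 < lam) (f W V : ℝ → ℝ)
    (hVdef : ∀ ξ, V ξ = (1 / 2) * ξ * W ξ - lam * |W ξ| ^ q - ((q - 2) / (2 * (q - 1))) * f ξ)
    (hfc : ContinuousOn f (Ici 0)) (hWc : ContinuousOn W (Ici 0))
    (hf : ∀ ξ, 0 < ξ → HasDerivAt f (W ξ) ξ)
    (hW : ∀ ξ, 0 < ξ → HasDerivAt W (V ξ) ξ)
    (hf0 : f 0 = -1) (hW0 : W 0 = 0) :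
    (∀ ξ, 0 < ξ → 0 < W ξ) ∧ ∀ ε > 0, ∀ᶠ ξ in atTop,
      W ξ ≤ ((1 / (lam * q)) ^ (1 / (q - 1)) + ε) * ξ ^ (1 / (q - 1)) := by
  have hq1 : 0 < q - 1 := by linarith
  have hq0 : 0 < q := by linarith
  set α := 1 / (q - 1) with hαdef
  have hα : 0 < α := by positivity
  have hαq : α * (q - 1) = 1 := by rw [hαdef]; field_simp
  set c := (q - 2) / (2 * (q - 1)) with hcdef
  have hc : 0 < c := div_pos (by linarith) (by linarith)
  have hcα : 1 / 2 - c = α / 2 := by rw [hcdef, hαdef]; field_simp; ring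
  set C₀ := (1 / (lam * q)) ^ α with hC₀
  have hC₀p : 0 < C₀ := by positivity
  have hC₀q : lam * q * C₀ ^ (q - 1) = 1 := by
    rw [hC₀, ← Real.rpow_mul (by positivity), hαq, Real.rpow_one]; field_simp
  have hVc : ContinuousOn V (Ici 0) := by
    have : ContinuousOn (fun ξ => (1 / 2) * ξ * W ξ - lam * |W ξ| ^ q - c * f ξ) (Ici 0) := by
      refine ((((continuousOn_const.mul continuousOn_id)).mul hWc).sub
        (continuousOn_const.mul (hWc.abs.rpow_const fun x _ => Or.inr hq0.le))).sub
        (continuousOn_const.mul hfc)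
    exact this.congr fun ξ _ => hVdef ξ
  set A : ℝ → ℝ := fun ξ => 1 / 2 * ξ - lam * q * |W ξ| ^ (q - 2) * W ξ with hA
  have hV : ∀ ξ, 0 < ξ → HasDerivAt V (A ξ * V ξ + α / 2 * W ξ) ξ := by
    intro ξ hξ
    have h1 : HasDerivAt (fun ξ => |W ξ| ^ q) (q * |W ξ| ^ (q - 2) * W ξ * V ξ) ξ :=
      (hasDerivAt_abs_rpow (W ξ) (by linarith)).comp ξ (hW ξ hξ)
    have h2 := ((((hasDerivAt_id ξ).const_mul (1 / 2 : ℝ)).mul (hW ξ hξ)).sub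
      (h1.const_mul lam)).sub ((hf ξ hξ).const_mul c)
    have h3 : HasDerivAt V _ ξ := h2.congr_of_eventuallyEq
      (Eventually.of_forall fun x => by simpa using hVdef x)
    convert h3 using 1
    simp only [hA, ← hcα, id]
    ring
  obtain ⟨hVp, hWp⟩ := kpz_pos W V _ A (α / 2) (by positivity) hWc hVc hW hV
    (fun _ _ => rfl) hW0 (by rw [hVdef, hf0, hW0]; simp [Real.zero_rpow hq0.ne', hc])
  refine ⟨hWp, ?_⟩
  -- the lower bound for `W`
  have hlow : ∀ a, 0 < a → a < C₀ → ∀ᶠ ξ in atTop, a * ξ ^ α ≤ W ξ := by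
    intro a ha haC
    obtain ⟨b, hab, hbC⟩ := exists_between haC
    have hb : 0 < b := ha.trans hab
    have hbq : lam * q * b ^ (q - 1) < 1 := by
      have := mul_lt_mul_of_pos_left (Real.rpow_lt_rpow hb.le hbC hq1)
        (show 0 < lam * q by positivity)
      linarith
    obtain ⟨μ, hμ0, hμ1, hμ2⟩ : ∃ μ : ℝ, 0 < μ ∧ μ < 1 / 2 ∧ lam * q * b ^ (q - 1) - 1 / 2 ≤ μ :=
      ⟨max (1 / 4) (lam * q * b ^ (q - 1) - 1 / 2), lt_max_of_lt_left (by norm_num),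
        max_lt (by norm_num) (by linarith), le_max_right _ _⟩
    refine kpz_core W V _ α b μ a hα hW hV hWp (fun ξ h => hVp ξ h.le) hμ0 hμ1 ha hab ?_
    intro ξ hξ hWb
    have hw := hWp ξ hξ
    have e1 : |W ξ| ^ (q - 2) * W ξ = W ξ ^ (q - 1) := by
      rw [abs_of_pos hw, show q - 1 = (q - 2) + 1 by ring, Real.rpow_add_one hw.ne']
    have e2 : W ξ ^ (q - 1) ≤ b ^ (q - 1) * ξ := by
      have := Real.rpow_le_rpow hw.le hWb hq1.le
      rwa [Real.mul_rpow hb.le (by positivity), ← Real.rpow_mul hξ.le, hαq, Real.rpow_one] at this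
    have e3 : -μ * ξ ≤ A ξ := by
      have h1 : A ξ = 1 / 2 * ξ - lam * q * (W ξ ^ (q - 1)) := by rw [← e1, hA]; ring
      have h2 := mul_le_mul_of_nonneg_left e2 (show 0 ≤ lam * q by positivity)
      have h3 := mul_le_mul_of_nonneg_right hμ2 hξ.le
      rw [h1]; linarith
    have := mul_le_mul_of_nonneg_right e3 (hVp ξ hξ.le).le
    linarith
  intro ε hε
  obtain ⟨δ, hδ0, hδε, hδC⟩ : ∃ δ, 0 < δ ∧ δ ≤ ε / 2 ∧ δ < C₀ :=
    ⟨min (ε / 2) (C₀ / 2), lt_min (by linarith) (by linarith), min_le_left _ _,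
      (min_le_right _ _).trans_lt (by linarith)⟩
  obtain ⟨X₀, hX₀⟩ := eventually_atTop.1 (hlow (C₀ - δ) (by linarith) (by linarith))
  obtain ⟨X, hX1, hXX⟩ : ∃ X, 1 ≤ X ∧ X₀ ≤ X := ⟨max 1 X₀, le_max_left _ _, le_max_right _ _⟩
  have hd : ∀ ξ, 0 < ξ → HasDerivAt (fun ξ => f ξ - (C₀ - δ) / (1 + α) * ξ ^ (1 + α))
      (W ξ - (C₀ - δ) / (1 + α) * ((1 + α) * ξ ^ (1 + α - 1))) ξ := fun ξ hξ =>
    (hf ξ hξ).sub ((Real.hasDerivAt_rpow_const (Or.inl hξ.ne')).const_mul _)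
  have hmono : MonotoneOn (fun ξ => f ξ - (C₀ - δ) / (1 + α) * ξ ^ (1 + α)) (Ici X) := by
    refine monotoneOn_of_hasDerivWithinAt_nonneg (convex_Ici X)
      (f' := fun ξ => W ξ - (C₀ - δ) / (1 + α) * ((1 + α) * ξ ^ (1 + α - 1)))
      (fun ξ hξ => (hd ξ (by linarith [mem_Ici.1 hξ])).continuousAt.continuousWithinAt)
      (fun ξ hξ => (hd ξ (by linarith [mem_Ici.1 (interior_subset hξ)])).hasDerivWithinAt) ?_
    intro ξ hξ
    have h1 := hX₀ ξ (hXX.trans (interior_subset hξ))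
    have h2 : (C₀ - δ) / (1 + α) * ((1 + α) * ξ ^ (1 + α - 1)) = (C₀ - δ) * ξ ^ α := by
      rw [add_sub_cancel_left]; field_simp
    rw [h2]; linarith
  obtain ⟨K, hK0, hK⟩ : ∃ K, 0 ≤ K ∧ -K ≤ f X - (C₀ - δ) / (1 + α) * X ^ (1 + α) :=
    ⟨|f X - (C₀ - δ) / (1 + α) * X ^ (1 + α)|, abs_nonneg _, neg_abs_le _⟩
  filter_upwards [eventually_ge_atTop X, eventually_ge_atTop (2 * K / ε)] with ξ h1 h2
  have hξ1 : 1 ≤ ξ := by linarith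
  have hξ : 0 < ξ := by linarith
  have hfl : (C₀ - δ) / (1 + α) * ξ ^ (1 + α) - K ≤ f ξ := by
    have := hmono (mem_Ici.2 le_rfl) (mem_Ici.2 h1) h1
    simp only at this
    linarith
  have hKξ : K ≤ ε / 2 * ξ := by
    rw [div_le_iff₀ hε] at h2; linarith
  have hw := hWp ξ hξ
  have hz : 1 ≤ ξ ^ α := Real.one_le_rpow hξ1 hα.le
  have hzz : ξ ^ (1 + α) = ξ * ξ ^ α := by rw [Real.rpow_add hξ, Real.rpow_one]
  rw [hzz] at hfl
  set z := ξ ^ α with hzdef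
  have hz0 : 0 < z := by linarith
  have hx0 : 0 < C₀ * z := by positivity
  -- Bernoulli
  have hB := one_add_mul_self_le_rpow_one_add (s := W ξ / (C₀ * z) - 1)
    (by have := div_pos hw hx0; linarith) (p := q) (by linarith)
  rw [add_sub_cancel, Real.div_rpow hw.le hx0.le] at hB
  have hxq : lam * q * (C₀ * z) ^ q = ξ * (C₀ * z) := by
    have e1 : (C₀ * z) ^ q = (C₀ * z) ^ (q - 1) * (C₀ * z) := by
      rw [← Real.rpow_add_one hx0.ne']; congr 1; ring
    have e2 : (C₀ * z) ^ (q - 1) = C₀ ^ (q - 1) * ξ := by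
      rw [Real.mul_rpow hC₀p.le hz0.le, hzdef, ← Real.rpow_mul hξ.le, hαq, Real.rpow_one]
    rw [e1, e2]
    linear_combination (ξ * (C₀ * z)) * hC₀q
  have hxqp : 0 < (C₀ * z) ^ q := by positivity
  rw [le_div_iff₀ hxqp] at hB
  have hB2 : ξ * (C₀ * z) / q + ξ * (W ξ - C₀ * z) ≤ lam * W ξ ^ q := by
    have e := mul_le_mul_of_nonneg_left hB hlam.le
    refine le_trans (le_of_eq ?_) e
    have e3 : lam * (C₀ * z) ^ q = ξ * (C₀ * z) / q := by
      rw [eq_div_iff hq0.ne']; linarith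
    calc ξ * (C₀ * z) / q + ξ * (W ξ - C₀ * z)
        = (1 + q * (W ξ / (C₀ * z) - 1)) * (ξ * (C₀ * z) / q) := by field_simp
      _ = _ := by rw [← e3]; ring
  have hVξ := hVp ξ hξ.le
  rw [hVdef, abs_of_pos hw] at hVξ
  have hcf := mul_le_mul_of_nonneg_left hfl hc.le
  have e4 : C₀ * (1 / 2 - 1 / q) = c * (C₀ / (1 + α)) := by
    have : 1 + α = q / (q - 1) := by rw [hαdef]; field_simp; ring
    rw [this, hcdef]; field_simp
  have e5 : ξ * (W ξ - C₀ * z) / 2 < c * (δ / (1 + α) * (ξ * z) + K) := by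
    have : c * ((C₀ - δ) / (1 + α) * (ξ * z) - K)
        = C₀ * (1 / 2 - 1 / q) * (ξ * z) - c * (δ / (1 + α) * (ξ * z) + K) := by
      rw [e4]; ring
    rw [this] at hcf
    have e6 : C₀ * (1 / 2 - 1 / q) * (ξ * z) = ξ * (C₀ * z) / 2 - ξ * (C₀ * z) / q := by ring
    linarith
  have e7 : δ / (1 + α) ≤ ε / 2 := by
    exact (div_le_self hδ0.le (by linarith)).trans hδε
  have hξz : 0 < ξ * z := by positivity
  have e8 : δ / (1 + α) * (ξ * z) + K ≤ ε * (ξ * z) := by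
    have a1 := mul_le_mul_of_nonneg_right e7 hξz.le
    have a2 : ξ ≤ ξ * z := le_mul_of_one_le_right hξ.le hz
    have a3 := mul_le_mul_of_nonneg_left a2 (show 0 ≤ ε / 2 by positivity)
    linarith
  have e9 : c * (δ / (1 + α) * (ξ * z) + K) ≤ 1 / 2 * (ε * (ξ * z)) :=
    mul_le_mul (by linarith) e8 (by positivity) (by norm_num)
  have e10 : ξ * (W ξ - C₀ * z) ≤ ξ * (ε * z) := by linarith
  have := le_of_mul_le_mul_left e10 hξ
  linarith

theorem kpz_g_limsup (q lam : ℝ) (hq : 2 < q) (hlam : 0 < lam)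
    (f : ℝ → ℝ)
    (hsol : SolvesKPZProfile q lam (Set.Ici 0) f)
    (hf0 : f 0 = -1)
    (hf'0 : derivWithin f (Set.Ici 0) 0 = 0) :
    Filter.limsup (kpzG q f) atTop ≤ (1 / (lam * q)) ^ (1 / (q - 1)) := by
  obtain ⟨hcd, hode⟩ := hsol
  have hWcd : ContDiffOn ℝ 1 (derivWithin f (Ici 0)) (Ici 0) :=
    hcd.derivWithin (uniqueDiffOn_Ici 0) (by norm_num)
  obtain ⟨hWp, hup⟩ := kpz_upper q lam hq hlam f (derivWithin f (Ici 0))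
    (fun ξ => (1 / 2) * ξ * derivWithin f (Ici 0) ξ - lam * |derivWithin f (Ici 0) ξ| ^ q
      - ((q - 2) / (2 * (q - 1))) * f ξ) (fun ξ => rfl)
    hcd.continuousOn hWcd.continuousOn
    (fun ξ hξ => by
      exact ((hcd.differentiableOn (by norm_num)) ξ hξ.le).hasDerivWithinAt.hasDerivAt
        (Ici_mem_nhds hξ))
    (fun ξ hξ => by
      have h1 := ((hWcd.differentiableOn (by norm_num)) ξ hξ.le).hasDerivWithinAt.hasDerivAt
        (Ici_mem_nhds hξ)
      have := hode ξ hξ.le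
      refine h1.congr_deriv ?_
      beta_reduce
      linarith) hf0 hf'0
  have hq1 : 0 < q - 1 := by linarith
  have hexp : ∀ t : ℝ, Real.exp (-t / (q - 1)) * (Real.exp t) ^ (1 / (q - 1)) = 1 := by
    intro t
    rw [← Real.exp_mul, ← Real.exp_add]
    rw [show -t / (q - 1) + t * (1 / (q - 1)) = 0 by ring, Real.exp_zero]
  apply le_of_forall_pos_le_add
  intro ε hε
  refine Filter.limsup_le_of_le ?_ ?_
  · apply Filter.IsBoundedUnder.isCoboundedUnder_le
    refine ⟨0, ?_⟩
    rw [eventually_map]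
    refine Eventually.of_forall fun t => ?_
    exact (mul_pos (Real.exp_pos _) (hWp _ (Real.exp_pos t))).le
  · filter_upwards [Real.tendsto_exp_atTop.eventually (hup ε hε)] with t ht
    have := mul_le_mul_of_nonneg_left ht (Real.exp_pos (-t / (q - 1))).le
    refine this.trans (le_of_eq ?_)
    rw [mul_left_comm, hexp, mul_one]
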